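/- Let E1 and E2 be finite equation sets. If E1 is NSTO, θ1 is a most general unifier of E1, and the equation set E2θ1 = {sθ1 ≐ tθ1 | s ≐ t ∈ E2} is NSTO, then E1 ∪ E2 is WNSTO. -/

import Mathlib

/-- Finite first-order terms: variables and function applications.
A function symbol is identified by its name together with the number of
arguments it is applied to (fixed arity). -/
inductive Trm : Type where
  | var : ℕ → Trm
  | fn  : ℕ → List Trm → Trm

namespace Trm

/-- `|t|`: the number of occurrences of variables and function symbols
(including constants) in the term `t`. -/
def size : Trm → ℕ
  | .var _ => 1
  | .fn _ ts => 1 + (ts.attach.map (fun ⟨t, _⟩ => size t)).sum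
decreasing_by
  have := List.sizeOf_lt_of_mem ‹_ ∈ ts›
  simp [Trm.fn.sizeOf_spec]; omega

/-- Application of a substitution (a map from variables to terms) to a term. -/
def subst (σ : ℕ → Trm) : Trm → Trm
  | .var x => σ x
  | .fn f ts => .fn f (ts.attach.map (fun ⟨t, _⟩ => subst σ t))
decreasing_by
  have := List.sizeOf_lt_of_mem ‹_ ∈ ts›
  simp [Trm.fn.sizeOf_spec]; omega

/-- The number of occurrences of the variable `x` in a term. -/
def count (x : ℕ) : Trm → ℕ
  | .var y => if y = x then 1 else 0
  | .fn _ ts => (ts.attach.map (fun ⟨t, _⟩ => count x t)).sum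
decreasing_by
  have := List.sizeOf_lt_of_mem ‹_ ∈ ts›
  simp [Trm.fn.sizeOf_spec]; omega

/-- `Occurs x t` : the variable `x` occurs in the term `t`. -/
inductive Occurs (x : ℕ) : Trm → Prop where
  | var : Occurs x (.var x)
  | fn {f : ℕ} {ts : List Trm} {t : Trm} : t ∈ ts → Occurs x t → Occurs x (.fn f ts)

end Trm

/-- The set of variables occurring in a term. -/
def varSet (t : Trm) : Set ℕ := {x | Trm.Occurs x t}

/-- The set of variables occurring in a list (tuple) of terms. -/
def varsL (l : List Trm) : Set ℕ := {x | ∃ t ∈ l, Trm.Occurs x t}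

/-- The number of occurrences of a variable in a list (tuple) of terms. -/
def countL (x : ℕ) (l : List Trm) : ℕ := (l.map (Trm.count x)).sum

/-- A term is ground if no variable occurs in it. -/
def Ground (t : Trm) : Prop := ∀ x, ¬ Trm.Occurs x t

/-- An equation set: a set of equations `s ≐ t` between terms,
represented as pairs of terms. -/
abbrev EqSet := Set (Trm × Trm)

/-- `σ` is a solution (unifier) of the equation set `E`. -/
def Solves (σ : ℕ → Trm) (E : EqSet) : Prop :=
  ∀ e ∈ E, Trm.subst σ e.1 = Trm.subst σ e.2

/-- `E` is unifiable: it has a unifier. -/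
def Unifiable (E : EqSet) : Prop := ∃ σ, Solves σ E

/-- `θ` is a most general unifier of `E`. -/
def IsMgu (θ : ℕ → Trm) (E : EqSet) : Prop :=
  Solves θ E ∧ ∀ σ, Solves σ E → ∃ ρ, ∀ x, σ x = Trm.subst ρ (θ x)

/-- The equation set `s ≐̈ t` pairing corresponding members of two
equal-length tuples of terms. -/
def zipEqs (s t : List Trm) : EqSet := {e | e ∈ s.zip t}

/-- The substitution `{X/t}` mapping `X` to `t` and every other variable
to itself. -/
def single (X : ℕ) (t : Trm) : ℕ → Trm :=
  fun y => if y = X then t else .var y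

/-- The equation set `Eθ`: the substitution applied to both sides of
every equation of `E`. -/
def substE (θ : ℕ → Trm) (E : EqSet) : EqSet :=
  (fun e => (Trm.subst θ e.1, Trm.subst θ e.2)) '' E

/-- One step of the Martelli–Montanari algorithm MMA: actions (1), (3), (4),
(5).  (Actions (2) and (6) halt with failure and produce no next equation
set; their applicability is captured by `ClashApp` and `OccApp` below.)
Two function applications carry the same function symbol iff they have the
same name and the same number of arguments (fixed arity). -/
inductive MMAStep : EqSet → EqSet → Prop where
  /-- Action (1): replace `f(s1,…,sn) ≐ f(t1,…,tn)` by `s1 ≐ t1, …, sn ≐ tn`. -/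
  | decomp {E : EqSet} {f : ℕ} {sl tl : List Trm} :
      (Trm.fn f sl, Trm.fn f tl) ∈ E → sl.length = tl.length →
      MMAStep E ((E \ {(Trm.fn f sl, Trm.fn f tl)}) ∪ {e | e ∈ sl.zip tl})
  /-- Action (3): delete an equation `X ≐ X`. -/
  | delete {E : EqSet} {x : ℕ} :
      (Trm.var x, Trm.var x) ∈ E →
      MMAStep E (E \ {(Trm.var x, Trm.var x)})
  /-- Action (4): replace `t ≐ X` (`t` not a variable) by `X ≐ t`. -/
  | flip {E : EqSet} {t : Trm} {x : ℕ} :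
      (t, Trm.var x) ∈ E → (∀ y, t ≠ Trm.var y) →
      MMAStep E ((E \ {(t, Trm.var x)}) ∪ {(Trm.var x, t)})
  /-- Action (5): on `X ≐ t` with `X ∉ Var(t)` and `X` occurring elsewhere,
  apply `{X/t}` to all other equations. -/
  | elim {E : EqSet} {x : ℕ} {t : Trm} :
      (Trm.var x, t) ∈ E → ¬ Trm.Occurs x t →
      (∃ e ∈ E \ {(Trm.var x, t)}, Trm.Occurs x e.1 ∨ Trm.Occurs x e.2) →
      MMAStep E ({(Trm.var x, t)} ∪ substE (single x t) (E \ {(Trm.var x, t)}))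

/-- Action (2) is applicable to `E`: `E` contains an equation
`f(s1,…,sn) ≐ g(t1,…,tm)` where the two function symbols differ. -/
def ClashApp (E : EqSet) : Prop :=
  ∃ f sl g tl, (Trm.fn f sl, Trm.fn g tl) ∈ E ∧
    (f ≠ g ∨ sl.length ≠ tl.length)

/-- Action (6) (the occur-check) is applicable to `E`: `E` contains an
equation `X ≐ t` with `X ∈ Var(t)` and `X ≠ t`. -/
def OccApp (E : EqSet) : Prop :=
  ∃ x t, (Trm.var x, t) ∈ E ∧ Trm.Occurs x t ∧ t ≠ Trm.var x

/-- One step of the algorithm MMA⁻ (MMA without the occur-check):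
actions (1), (3), (4), (5a), (5b). -/
inductive MMAmStep : EqSet → EqSet → Prop where
  /-- Action (1). -/
  | decomp {E : EqSet} {f : ℕ} {sl tl : List Trm} :
      (Trm.fn f sl, Trm.fn f tl) ∈ E → sl.length = tl.length →
      MMAmStep E ((E \ {(Trm.fn f sl, Trm.fn f tl)}) ∪ {e | e ∈ sl.zip tl})
  /-- Action (3). -/
  | delete {E : EqSet} {x : ℕ} :
      (Trm.var x, Trm.var x) ∈ E →
      MMAmStep E (E \ {(Trm.var x, Trm.var x)})
  /-- Action (4). -/
  | flip {E : EqSet} {t : Trm} {x : ℕ} :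
      (t, Trm.var x) ∈ E → (∀ y, t ≠ Trm.var y) →
      MMAmStep E ((E \ {(t, Trm.var x)}) ∪ {(Trm.var x, t)})
  /-- Action (5a): on `X ≐ Y` with `X, Y` distinct variables and `X`
  occurring elsewhere, apply `{X/Y}` to all other equations. -/
  | elimVar {E : EqSet} {x y : ℕ} :
      (Trm.var x, Trm.var y) ∈ E → x ≠ y →
      (∃ e ∈ E \ {(Trm.var x, Trm.var y)}, Trm.Occurs x e.1 ∨ Trm.Occurs x e.2) →
      MMAmStep E
        ({(Trm.var x, Trm.var y)} ∪
          substE (single x (Trm.var y)) (E \ {(Trm.var x, Trm.var y)}))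
  /-- Action (5b): on `X ≐ t`, `X ≐ u` with `t, u` distinct non-variable
  terms and `|t| ≤ |u|`, replace `X ≐ u` by `t ≐ u`. -/
  | merge {E : EqSet} {x : ℕ} {t u : Trm} :
      (Trm.var x, t) ∈ E → (Trm.var x, u) ∈ E → t ≠ u →
      (∀ y, t ≠ Trm.var y) → (∀ y, u ≠ Trm.var y) → t.size ≤ u.size →
      MMAmStep E ((E \ {(Trm.var x, u)}) ∪ {(t, u)})

/-- `F` is reachable from `E` by (non-failing) actions of MMA. -/
def Reachable (E F : EqSet) : Prop := Relation.ReflTransGen MMAStep E F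

/-- `E` is NSTO: no run of MMA on `E` performs action (6), i.e. the
occur-check action is never applicable along any run. -/
def NSTO (E : EqSet) : Prop := ∀ F, Reachable E F → ¬ OccApp F

/-- `E` is WNSTO: there exists an occur-check free run of MMA on `E`, i.e. a
maximal run that either halts with failure by action (2), or ends with an
equation set to which no action (including (2) and (6)) applies — without
ever performing action (6). -/
def WNSTO (E : EqSet) : Prop :=
  ∃ F, Reachable E F ∧
    (ClashApp F ∨ (¬ ClashApp F ∧ ¬ OccApp F ∧ ∀ F', ¬ MMAStep F F'))

/-!
Runs of MMA on finite equation sets terminate, so a finite equation set is WNSTO if and only if it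
is unifiable or some run on it reaches a clash. If `E₂θ₁` is unifiable, composing a unifier of it
with `θ₁` unifies `E₁ ∪ E₂`. Otherwise a run on `E₂θ₁` reaches a clash. Let `S` be a solved form
reached from `E₁` and `σ` the most general unifier read off `S`; since `σ` and `θ₁` differ by a
renaming of variables, `E₂σ` reaches a clash as well. On `E₁ ∪ E₂`, repeat the run from `E₁` to `S`
and then eliminate the solved variables of `S` from all other equations. The resulting set contains
every equation of `E₂σ` except perhaps trivial equations `t ≐ t`, which never contribute to a clash,
so it reaches the clash of `E₂σ`.
-/

namespace Trm

variable {σ τ : ℕ → Trm} {t u : Trm} {x y : ℕ}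

@[elab_as_elim]
theorem induction {motive : Trm → Prop} (var : ∀ x, motive (.var x))
    (fn : ∀ f ts, (∀ t ∈ ts, motive t) → motive (.fn f ts)) : ∀ t, motive t
  | .var x => var x
  | .fn f ts => fn f ts fun t _ => induction var fn t

@[simp]
theorem subst_var : subst σ (.var x) = σ x := by
  simp only [subst]

@[simp]
theorem subst_fn {f : ℕ} {ts : List Trm} : subst σ (.fn f ts) = .fn f (ts.map (subst σ)) := by
  simp [subst]

@[simp]
theorem occurs_var : Occurs x (.var y) ↔ x = y :=
  ⟨fun | .var => rfl, fun h => h ▸ .var⟩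

@[simp]
theorem occurs_fn {f : ℕ} {ts : List Trm} : Occurs x (.fn f ts) ↔ ∃ t ∈ ts, Occurs x t :=
  ⟨fun | .fn ht hx => ⟨_, ht, hx⟩, fun ⟨_, ht, hx⟩ => .fn ht hx⟩

theorem subst_eq_subst_iff : subst σ t = subst τ t ↔ ∀ x, Occurs x t → σ x = τ x := by
  induction t using Trm.induction with
  | var y => simp
  | fn f ts ih =>
    simp only [subst_fn, fn.injEq, true_and, List.map_inj_left, occurs_fn]
    grind

theorem subst_id : subst .var t = t := by
  induction t using Trm.induction with
  | var y => simp
  | fn f ts ih => simpa using (List.map_congr_left ih).trans (List.map_id ts)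

theorem subst_eq_self_iff : subst σ t = t ↔ ∀ x, Occurs x t → σ x = .var x := by
  rw [← subst_eq_subst_iff, subst_id]

theorem subst_subst : subst τ (subst σ t) = subst (fun x => subst τ (σ x)) t := by
  induction t using Trm.induction with
  | var y => simp
  | fn f ts ih => simpa using ih

theorem occurs_subst : Occurs y (subst σ t) ↔ ∃ x, Occurs x t ∧ Occurs y (σ x) := by
  induction t using Trm.induction with
  | var z => simp
  | fn f ts ih =>
    simp only [subst_fn, occurs_fn, List.mem_map]
    grind

theorem finite_varSet : (varSet t).Finite := by
  induction t using Trm.induction with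
  | var y => simp [varSet]
  | fn f ts ih =>
    have hunion : varSet (.fn f ts) = ⋃ t ∈ {t | t ∈ ts}, varSet t := by ext; simp [varSet]
    exact hunion ▸ (List.finite_toSet ts).biUnion ih

theorem subst_subst_single (h : σ x = subst σ t) :
    subst σ (subst (single x t) u) = subst σ u := by
  rw [subst_subst, subst_eq_subst_iff]
  intro y _
  by_cases hyx : y = x <;> simp [single, hyx, h]

theorem occurs_subst_single :
    Occurs y (subst (single x t) u) ↔ (Occurs x u ∧ Occurs y t) ∨ (y ≠ x ∧ Occurs y u) := by
  rw [occurs_subst]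
  constructor
  · rintro ⟨z, hz, hy⟩
    by_cases hzx : z = x <;> simp_all [single]
  · rintro (⟨hx, hy⟩ | ⟨hyx, hy⟩)
    · exact ⟨x, hx, by simpa [single] using hy⟩
    · exact ⟨y, hy, by simp [single, hyx]⟩

/-- The size of a term in which function symbols count twice. A non-variable term then weighs more
than a variable, so that reorienting an equation `t ≐ X` decreases `eqWeight`. -/
def weight : Trm → ℕ
  | .var _ => 1
  | .fn _ ts => 2 + (ts.map weight).sum

theorem weight_var : weight (.var x) = 1 := by
  simp only [weight]

theorem weight_fn {f : ℕ} {ts : List Trm} : weight (.fn f ts) = 2 + (ts.map weight).sum := by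
  simp only [weight]

theorem weight_lt_of_mem {f : ℕ} {ts : List Trm} (h : t ∈ ts) : weight t < weight (.fn f ts) := by
  have hle : weight t ≤ (ts.map weight).sum := List.le_sum_of_mem (List.mem_map_of_mem h)
  rw [weight_fn]
  omega

theorem weight_le_of_occurs (h : Occurs x t) : weight (σ x) ≤ weight (subst σ t) := by
  induction t using Trm.induction with
  | var y => simp_all
  | fn f ts ih =>
    obtain ⟨t, ht, hx⟩ := occurs_fn.1 h
    rw [subst_fn]
    exact (ih t ht hx).trans (weight_lt_of_mem (List.mem_map_of_mem ht)).le

theorem subst_ne_of_occurs (h : Occurs x t) (hne : t ≠ .var x) : σ x ≠ subst σ t := by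
  cases t with
  | var y => simp_all
  | fn f ts =>
    obtain ⟨t, ht, hx⟩ := occurs_fn.1 h
    rw [subst_fn]
    exact fun heq => ((weight_le_of_occurs hx).trans_lt
      (weight_lt_of_mem (List.mem_map_of_mem ht))).ne (congrArg weight heq)

theorem injective_subst_rename {r : ℕ → ℕ} (hr : Function.Injective r) :
    Function.Injective (subst (.var ∘ r)) := by
  refine Function.LeftInverse.injective (g := subst (.var ∘ Function.invFun r)) fun t => ?_
  simp [subst_subst, subst_eq_self_iff, Function.leftInverse_invFun hr _]

end Trm

/-- The variable `x` occurs in the equation `e`. -/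
def OccursEq (x : ℕ) (e : Trm × Trm) : Prop :=
  Trm.Occurs x e.1 ∨ Trm.Occurs x e.2

/-- The variables occurring in `E`. -/
def eqVars (E : EqSet) : Set ℕ :=
  {x | ∃ e ∈ E, OccursEq x e}

/-- `Replaces e N`: actions (1), (3) and (4), seen locally. They replace the selected equation `e`
by the equations `N` and leave the other equations alone. -/
inductive Replaces : Trm × Trm → EqSet → Prop where
  | decomp {f : ℕ} {sl tl : List Trm} :
      sl.length = tl.length → Replaces (.fn f sl, .fn f tl) {e | e ∈ sl.zip tl}
  | delete {x : ℕ} : Replaces (.var x, .var x) ∅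
  | flip {t : Trm} {x : ℕ} : (∀ y, t ≠ .var y) → Replaces (t, .var x) {(.var x, t)}

/-- The result of action (5) on the equation `x ≐ t` of `E`. -/
def eliminate (x : ℕ) (t : Trm) (E : EqSet) : EqSet :=
  {(.var x, t)} ∪ substE (single x t) (E \ {(.var x, t)})

section Equations

variable {σ θ : ℕ → Trm} {A B E : EqSet} {e : Trm × Trm} {x : ℕ} {t : Trm}

theorem solves_union : Solves σ (A ∪ B) ↔ Solves σ A ∧ Solves σ B := by
  simp only [Solves, Set.mem_union, or_imp, forall_and]

theorem solves_singleton : Solves σ {e} ↔ Trm.subst σ e.1 = Trm.subst σ e.2 := by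
  simp [Solves]

theorem solves_iff_of_mem (he : e ∈ E) : Solves σ E ↔ Solves σ {e} ∧ Solves σ (E \ {e}) := by
  rw [← solves_union, Set.union_sdiff_cancel (Set.singleton_subset_iff.2 he)]

theorem solves_substE : Solves σ (substE θ E) ↔ Solves (fun x => Trm.subst σ (θ x)) E := by
  simp only [Solves, substE, Set.forall_mem_image, Trm.subst_subst]

theorem finite_substE (hE : E.Finite) : (substE θ E).Finite :=
  hE.image _

theorem substE_union : substE σ (A ∪ B) = substE σ A ∪ substE σ B :=
  Set.image_union _ _ _

theorem substE_singleton : substE σ {e} = {(Trm.subst σ e.1, Trm.subst σ e.2)} :=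
  Set.image_singleton

theorem substE_substE_single (h : σ x = Trm.subst σ t) :
    substE σ (substE (single x t) E) = substE σ E := by
  simp only [substE, Set.image_image, Trm.subst_subst_single h]

theorem solves_substE_single (h : σ x = Trm.subst σ t) :
    Solves σ (substE (single x t) E) ↔ Solves σ E := by
  simp only [Solves, substE, Set.forall_mem_image, Trm.subst_subst_single h]

theorem finite_eqVars (hE : E.Finite) : (eqVars E).Finite := by
  have hunion : eqVars E = ⋃ e ∈ E, (varSet e.1 ∪ varSet e.2) := by
    ext; simp [eqVars, OccursEq, varSet]
  exact hunion ▸ hE.biUnion fun _ _ => Trm.finite_varSet.union Trm.finite_varSet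

theorem substE_congr (h : ∀ x ∈ eqVars E, σ x = θ x) : substE σ E = substE θ E :=
  Set.image_congr fun e he => Prod.ext
    (Trm.subst_eq_subst_iff.2 fun x hx => h x ⟨e, he, .inl hx⟩)
    (Trm.subst_eq_subst_iff.2 fun x hx => h x ⟨e, he, .inr hx⟩)

theorem substE_eq_self (h : ∀ x ∈ eqVars E, θ x = .var x) : substE θ E = E :=
  (substE_congr h).trans (by simp only [substE, Trm.subst_id, Prod.mk.eta, Set.image_id'])

theorem substE_single_eq_self (h : x ∉ eqVars E) : substE (single x t) E = E :=
  substE_eq_self fun _ hy => if_neg (ne_of_mem_of_not_mem hy h)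

theorem substE_eliminate (he : (.var x, t) ∈ E) (hθ : θ x = Trm.subst θ t) :
    substE θ (eliminate x t E) = substE θ E := by
  rw [eliminate, substE_union, substE_substE_single hθ, ← substE_union,
    Set.union_sdiff_cancel (Set.singleton_subset_iff.2 he)]

theorem Solves.not_clashApp (h : Solves σ E) : ¬ ClashApp E := by
  rintro ⟨f, sl, g, tl, hmem, hne⟩
  have heq := h _ hmem
  simp only [Trm.subst_fn, Trm.fn.injEq] at heq
  have hlen : sl.length = tl.length := by simpa using congrArg List.length heq.2
  tauto

theorem Solves.not_occApp (h : Solves σ E) : ¬ OccApp E := by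
  rintro ⟨x, t, hmem, hx, hne⟩
  exact Trm.subst_ne_of_occurs hx hne (by simpa using h _ hmem)

end Equations

section Steps

variable {E F N : EqSet} {e e' : Trm × Trm} {x : ℕ} {t : Trm}

theorem Replaces.mmaStep (h : Replaces e N) (he : e ∈ E) : MMAStep E (E \ {e} ∪ N) := by
  cases h with
  | decomp hlen => exact .decomp he hlen
  | delete => simpa using .delete he
  | flip ht => exact .flip he ht

theorem mmaStep_iff : MMAStep E F ↔
    (∃ e ∈ E, ∃ N, Replaces e N ∧ F = E \ {e} ∪ N) ∨
    ∃ x t, (Trm.var x, t) ∈ E ∧ ¬ Trm.Occurs x t ∧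
      x ∈ eqVars (E \ {(Trm.var x, t)}) ∧ F = eliminate x t E := by
  constructor
  · rintro (⟨he, hlen⟩ | he | ⟨he, ht⟩ | ⟨he, hx, hocc⟩)
    · exact .inl ⟨_, he, _, .decomp hlen, rfl⟩
    · exact .inl ⟨_, he, _, .delete, (Set.union_empty _).symm⟩
    · exact .inl ⟨_, he, _, .flip ht, rfl⟩
    · exact .inr ⟨_, _, he, hx, hocc, rfl⟩
  · rintro (⟨e, he, N, hN, rfl⟩ | ⟨x, t, he, hx, hocc, rfl⟩)
    · exact hN.mmaStep he
    · exact .elim he hx hocc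

theorem map_subst_eq_map_subst_iff {σ : ℕ → Trm} {sl tl : List Trm}
    (h : sl.length = tl.length) :
    sl.map (Trm.subst σ) = tl.map (Trm.subst σ) ↔ Solves σ {e | e ∈ sl.zip tl} := by
  rw [← List.forall₂_eq_eq_eq, List.forall₂_map_left_iff, List.forall₂_map_right_iff,
    List.forall₂_iff_zip]
  simp [h, Solves]

theorem Replaces.solves_iff (h : Replaces e N) (σ : ℕ → Trm) : Solves σ N ↔ Solves σ {e} := by
  rw [solves_singleton]
  cases h with
  | decomp hlen => simp [← map_subst_eq_map_subst_iff hlen]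
  | delete => simp [Solves]
  | flip _ => exact solves_singleton.trans eq_comm

theorem Replaces.fst_eq_snd (h : Replaces e N) (he : e.1 = e.2) (he' : e' ∈ N) :
    e'.1 = e'.2 := by
  have hN : Solves .var N := (h.solves_iff .var).2 (solves_singleton.2 (he ▸ rfl))
  simpa only [Trm.subst_id] using hN e' he'

theorem Replaces.occursEq (h : Replaces e N) (he' : e' ∈ N) (hx : OccursEq x e') :
    OccursEq x e := by
  cases h with
  | decomp =>
    obtain ⟨hs, ht⟩ := List.of_mem_zip (b := e'.2) he'
    exact hx.imp (.fn hs) (.fn ht)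
  | delete => exact he'.elim
  | flip => cases he'; exact hx.symm

theorem Replaces.occurs_of_var (h : Replaces (.var x, t) N) : Trm.Occurs x t := by
  cases h with
  | delete => exact .var
  | flip ht => exact absurd rfl (ht x)

theorem Replaces.finite (h : Replaces e N) : N.Finite := by
  cases h with
  | decomp => exact List.finite_toSet _
  | delete => exact Set.finite_empty
  | flip => exact Set.finite_singleton _

theorem MMAStep.solves_iff (h : MMAStep E F) (σ : ℕ → Trm) : Solves σ F ↔ Solves σ E := by
  obtain ⟨e, he, N, hN, rfl⟩ | ⟨x, t, he, -, -, rfl⟩ := mmaStep_iff.1 h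
  · rw [solves_union, hN.solves_iff, solves_iff_of_mem he, and_comm]
  · rw [eliminate, solves_union, solves_iff_of_mem he]
    refine and_congr_right fun hxt => solves_substE_single ?_
    simpa using solves_singleton.1 hxt

theorem MMAStep.finite (h : MMAStep E F) (hE : E.Finite) : F.Finite := by
  obtain ⟨e, -, N, hN, rfl⟩ | ⟨x, t, -, -, -, rfl⟩ := mmaStep_iff.1 h
  · exact hE.sdiff.union hN.finite
  · exact (Set.finite_singleton _).union (finite_substE hE.sdiff)

theorem Reachable.solves_iff (h : Reachable E F) (σ : ℕ → Trm) : Solves σ F ↔ Solves σ E := by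
  induction h with
  | refl => rfl
  | tail _ hstep ih => exact (hstep.solves_iff σ).trans ih

theorem Reachable.finite (h : Reachable E F) (hE : E.Finite) : F.Finite := by
  induction h with
  | refl => exact hE
  | tail _ hstep ih => exact hstep.finite ih

end Steps

section Termination

variable {A B E F N : EqSet} {e : Trm × Trm} {x y : ℕ} {t u : Trm}

/-- `x ≐ t` is a solved equation of `E`: `x` occurs in `E` only as its left-hand side. -/
structure IsSolvedEq (E : EqSet) (x : ℕ) (t : Trm) : Prop where
  mem : (.var x, t) ∈ E
  not_occurs : ¬ Trm.Occurs x t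
  eq_of_occursEq : ∀ e ∈ E, OccursEq x e → e = (.var x, t)

/-- The variables of `E` that have no solved equation. Their number never increases along a run of
MMA, and action (5) decreases it. -/
def unsolvedVars (E : EqSet) : Set ℕ :=
  {x ∈ eqVars E | ∀ t, ¬ IsSolvedEq E x t}

/-- The weight of an equation. The left-hand side counts double, so that action (4) decreases the
weight by moving a variable there. -/
def eqWeight (e : Trm × Trm) : ℕ :=
  2 * e.1.weight + e.2.weight

/-- The total weight of the equations of a finite `E` (and `0` if `E` is infinite). -/
noncomputable def totalWeight (E : EqSet) : ℕ :=
  ∑ᶠ e ∈ E, eqWeight e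

/-- The termination measure of MMA, ordered lexicographically. -/
noncomputable def mmaMeasure (E : EqSet) : ℕ ×ₗ ℕ :=
  toLex ((unsolvedVars E).ncard, totalWeight E)

theorem finite_unsolvedVars (hE : E.Finite) : (unsolvedVars E).Finite :=
  (finite_eqVars hE).subset (Set.sep_subset _ _)

theorem Replaces.unsolvedVars_subset (h : Replaces e N) (he : e ∈ E) :
    unsolvedVars (E \ {e} ∪ N) ⊆ unsolvedVars E := by
  rintro x ⟨⟨e', he', hx⟩, hunsolved⟩
  refine ⟨he'.elim (fun h' => ⟨e', h'.1, hx⟩) fun h' => ⟨e, he, h.occursEq h' hx⟩, ?_⟩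
  rintro t ⟨hmem, hxt, huniq⟩
  have hne : (.var x, t) ≠ e := by
    rintro rfl
    exact hxt h.occurs_of_var
  refine hunsolved t ⟨.inl ⟨hmem, hne⟩, hxt, ?_⟩
  rintro e'' (he'' | he'') hx''
  · exact huniq e'' he''.1 hx''
  · exact absurd (huniq e he (h.occursEq he'' hx'')).symm hne

theorem not_occursEq_of_mem_substE_single (hx : ¬ Trm.Occurs x t)
    (he : e ∈ substE (single x t) E) : ¬ OccursEq x e := by
  obtain ⟨e, -, rfl⟩ := he
  simp [OccursEq, Trm.occurs_subst_single, hx]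

theorem OccursEq.of_mem_substE_single (he : e ∈ substE (single x t) E) (hy : OccursEq y e) :
    Trm.Occurs y t ∨ ∃ e' ∈ E, OccursEq y e' ∧
      e = (Trm.subst (single x t) e'.1, Trm.subst (single x t) e'.2) := by
  obtain ⟨e', he', rfl⟩ := he
  simp only [OccursEq, Trm.occurs_subst_single] at hy
  by_cases hyt : Trm.Occurs y t
  · exact .inl hyt
  · exact .inr ⟨e', he', hy.imp (by tauto) (by tauto), rfl⟩

theorem isSolvedEq_eliminate (hx : ¬ Trm.Occurs x t) : IsSolvedEq (eliminate x t E) x t where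
  mem := .inl rfl
  not_occurs := hx
  eq_of_occursEq _ he hxe :=
    he.elim id fun he => absurd hxe (not_occursEq_of_mem_substE_single hx he)

theorem eqVars_eliminate_subset (he : (.var x, t) ∈ E) : eqVars (eliminate x t E) ⊆ eqVars E := by
  rintro y ⟨e, rfl | he', hy⟩
  · exact ⟨_, he, hy⟩
  · obtain hyt | ⟨e', he', hy', -⟩ := hy.of_mem_substE_single he'
    · exact ⟨_, he, .inr hyt⟩
    · exact ⟨e', he'.1, hy'⟩

theorem IsSolvedEq.eliminate (h : IsSolvedEq E y u) (he : (.var x, t) ∈ E) (hyx : y ≠ x) :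
    IsSolvedEq (eliminate x t E) y (Trm.subst (single x t) u) := by
  have hne : (Trm.var x, t) ≠ (.var y, u) := by simp [hyx.symm]
  have hyt : ¬ Trm.Occurs y t := fun hyt => hne (h.eq_of_occursEq _ he (.inr hyt))
  refine ⟨.inr ⟨(.var y, u), ⟨h.mem, hne.symm⟩, by simp [single, hyx]⟩, ?_, ?_⟩
  · simp [Trm.occurs_subst_single, hyt, h.not_occurs]
  · rintro e (rfl | he') hy
    · exact absurd (h.eq_of_occursEq _ he hy) hne
    · obtain ⟨e', hmem, hy', rfl⟩ := (hy.of_mem_substE_single he').resolve_left hyt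
      simp [h.eq_of_occursEq e' hmem.1 hy', single, hyx]

theorem unsolvedVars_eliminate_ssubset (he : (.var x, t) ∈ E) (hx : ¬ Trm.Occurs x t)
    (hocc : x ∈ eqVars (E \ {(.var x, t)})) :
    unsolvedVars (eliminate x t E) ⊂ unsolvedVars E := by
  have hsolved : IsSolvedEq (eliminate x t E) x t := isSolvedEq_eliminate hx
  have hunsolved : x ∈ unsolvedVars E := by
    refine ⟨⟨_, he, .inl .var⟩, fun u hu => ?_⟩
    obtain ⟨e, he', hxe⟩ := hocc
    exact he'.2 ((hu.eq_of_occursEq e he'.1 hxe).trans (hu.eq_of_occursEq _ he (.inl .var)).symm)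
  refine ⟨fun y hy => ⟨eqVars_eliminate_subset he hy.1, fun u hu => ?_⟩,
    fun hsub => (hsub hunsolved).2 t hsolved⟩
  obtain rfl | hyx := eq_or_ne y x
  · exact hy.2 t hsolved
  · exact hy.2 _ (hu.eliminate he hyx)

theorem totalWeight_union_le (hA : A.Finite) (hB : B.Finite) :
    totalWeight (A ∪ B) ≤ totalWeight A + totalWeight B :=
  (Nat.le_add_right _ _).trans (finsum_mem_union_inter hA hB).le

theorem totalWeight_singleton : totalWeight {e} = eqWeight e :=
  finsum_mem_singleton

theorem totalWeight_sdiff_singleton_add (hE : E.Finite) (he : e ∈ E) :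
    totalWeight (E \ {e}) + eqWeight e = totalWeight E := by
  rw [← totalWeight_singleton (e := e)]
  have hunion := finsum_mem_union (f := eqWeight) Set.disjoint_sdiff_left hE.sdiff
    (Set.finite_singleton e)
  rwa [Set.sdiff_union_of_subset (Set.singleton_subset_iff.2 he), eq_comm] at hunion

theorem totalWeight_zip_le (sl tl : List Trm) : totalWeight {e | e ∈ sl.zip tl} ≤
    2 * (sl.map Trm.weight).sum + (tl.map Trm.weight).sum := by
  induction sl generalizing tl with
  | nil => simp [totalWeight]
  | cons s sl ih =>
    cases tl with
    | nil => simp [totalWeight]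
    | cons t tl =>
      have hcons : ({e | e ∈ (s :: sl).zip (t :: tl)} : EqSet) =
          {(s, t)} ∪ {e | e ∈ sl.zip tl} := by ext; simp
      have hle := totalWeight_union_le (Set.finite_singleton (s, t))
        (List.finite_toSet (sl.zip tl))
      rw [totalWeight_singleton] at hle
      have := ih tl
      simp only [hcons, List.map_cons, List.sum_cons, eqWeight] at hle ⊢
      omega

theorem Replaces.totalWeight_lt (h : Replaces e N) : totalWeight N < eqWeight e := by
  cases h with
  | @decomp f sl tl =>
    have := totalWeight_zip_le sl tl
    simp only [eqWeight, Trm.weight_fn]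
    omega
  | delete => simp [totalWeight, eqWeight, Trm.weight_var]
  | @flip t x ht =>
    have ht' : 1 < t.weight := by
      cases t with
      | var y => exact absurd rfl (ht y)
      | fn f ts => rw [Trm.weight_fn]; omega
    simp only [totalWeight_singleton, eqWeight, Trm.weight_var]
    omega

theorem MMAStep.mmaMeasure_lt (h : MMAStep E F) (hE : E.Finite) : mmaMeasure F < mmaMeasure E := by
  rw [mmaMeasure, mmaMeasure, Prod.Lex.toLex_lt_toLex']
  obtain ⟨e, he, N, hN, rfl⟩ | ⟨x, t, he, hx, hocc, rfl⟩ := mmaStep_iff.1 h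
  · refine ⟨Set.ncard_le_ncard (hN.unsolvedVars_subset he) (finite_unsolvedVars hE), fun _ => ?_⟩
    calc totalWeight (E \ {e} ∪ N) ≤ totalWeight (E \ {e}) + totalWeight N :=
          totalWeight_union_le hE.sdiff hN.finite
      _ < totalWeight (E \ {e}) + eqWeight e := Nat.add_lt_add_left hN.totalWeight_lt _
      _ = totalWeight E := totalWeight_sdiff_singleton_add hE he
  · have hlt := Set.ncard_lt_ncard (unsolvedVars_eliminate_ssubset he hx hocc)
      (finite_unsolvedVars hE)
    exact ⟨hlt.le, fun heq => absurd heq hlt.ne⟩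

theorem acc_mmaStep (hE : E.Finite) : Acc (fun F E => MMAStep E F) E := by
  induction hm : mmaMeasure E using WellFoundedLT.induction generalizing E with
  | _ m ih =>
    subst hm
    exact ⟨_, fun F hF => ih _ (hF.mmaMeasure_lt hE) (hF.finite hE) rfl⟩

theorem exists_reachable_terminal (hE : E.Finite) :
    ∃ F, Reachable E F ∧ ∀ F', ¬ MMAStep F F' := by
  induction acc_mmaStep hE with
  | intro E _ ih =>
    by_cases hstep : ∃ F, MMAStep E F
    · obtain ⟨F, hF⟩ := hstep
      obtain ⟨G, hG, hterm⟩ := ih F hF (hF.finite hE)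
      exact ⟨G, hG.head hF, hterm⟩
    · exact ⟨E, .refl, not_exists.1 hstep⟩

end Termination

section SolvedForm

variable {E F S : EqSet} {x : ℕ} {t : Trm}

/-- A solved form: a set of solved equations `x ≐ t`, on which no action of MMA applies. -/
def IsSolvedForm (S : EqSet) : Prop :=
  ∀ e ∈ S, ∃ x t, e = (.var x, t) ∧ IsSolvedEq S x t

open Classical in
/-- The most general unifier read off a solved form `S`: it maps `x` to `t` if `x ≐ t` is in `S`,
and fixes the variables that are not a left-hand side of `S`. -/
noncomputable def solvedSubst (S : EqSet) (x : ℕ) : Trm :=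
  if h : ∃ t, (.var x, t) ∈ S then h.choose else .var x

theorem isSolvedForm_of_terminal (hclash : ¬ ClashApp S) (hocc : ¬ OccApp S)
    (hterm : ∀ F, ¬ MMAStep S F) : IsSolvedForm S := by
  rintro ⟨_ | ⟨f, sl⟩, t⟩ he
  case var x =>
    have hxt : ¬ Trm.Occurs x t := fun hxt => by
      have ht : t = .var x := by_contra fun hne => hocc ⟨x, t, he, hxt, hne⟩
      exact hterm _ (.delete (ht ▸ he))
    refine ⟨x, t, rfl, he, hxt, fun e' he' hx => ?_⟩
    by_contra hne
    exact hterm _ (.elim he hxt ⟨e', ⟨he', hne⟩, hx⟩)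
  case fn =>
    cases t with
    | var y => exact absurd (.flip he (by simp)) (hterm _)
    | fn g tl =>
      have heq : f = g ∧ sl.length = tl.length := by
        by_contra hne
        exact hclash ⟨f, sl, g, tl, he, by tauto⟩
      obtain ⟨rfl, hlen⟩ := heq
      exact absurd (.decomp he hlen) (hterm _)

theorem IsSolvedForm.isSolvedEq (hS : IsSolvedForm S) (hmem : (.var x, t) ∈ S) :
    IsSolvedEq S x t := by
  obtain ⟨y, u, heq, h⟩ := hS _ hmem
  cases heq
  exact h

theorem IsSolvedForm.solvedSubst_of_mem (hS : IsSolvedForm S) (hmem : (.var x, t) ∈ S) :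
    solvedSubst S x = t := by
  have hex : ∃ t, (Trm.var x, t) ∈ S := ⟨t, hmem⟩
  rw [solvedSubst, dif_pos hex]
  exact congrArg Prod.snd ((hS.isSolvedEq hmem).eq_of_occursEq _ hex.choose_spec (.inl .var))

theorem solvedSubst_of_forall_notMem (h : ∀ t, (.var x, t) ∉ S) : solvedSubst S x = .var x :=
  dif_neg (not_exists.2 h)

theorem IsSolvedForm.subst_solvedSubst_of_mem (hS : IsSolvedForm S) (hmem : (.var x, t) ∈ S) :
    Trm.subst (solvedSubst S) t = t := by
  refine Trm.subst_eq_self_iff.2 fun y hy => solvedSubst_of_forall_notMem fun u hu => ?_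
  have heq := (hS.isSolvedEq hu).eq_of_occursEq _ hmem (.inr hy)
  cases heq
  exact (hS.isSolvedEq hu).not_occurs hy

theorem IsSolvedForm.isMgu_solvedSubst (hS : IsSolvedForm S) : IsMgu (solvedSubst S) S := by
  refine ⟨fun e he => ?_, fun τ hτ => ⟨τ, fun x => ?_⟩⟩
  · obtain ⟨x, t, rfl, -⟩ := hS e he
    simp only [Trm.subst_var, hS.solvedSubst_of_mem he, hS.subst_solvedSubst_of_mem he]
  · by_cases hx : ∃ t, (Trm.var x, t) ∈ S
    · obtain ⟨t, ht⟩ := hx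
      simpa only [hS.solvedSubst_of_mem ht, Trm.subst_var] using hτ _ ht
    · simp only [solvedSubst_of_forall_notMem (not_exists.1 hx), Trm.subst_var]

theorem exists_reachable_isSolvedForm (hE : E.Finite) (h : Unifiable E) :
    ∃ S, Reachable E S ∧ IsSolvedForm S := by
  obtain ⟨σ, hσ⟩ := h
  obtain ⟨S, hES, hterm⟩ := exists_reachable_terminal hE
  have hσS : Solves σ S := (hES.solves_iff σ).2 hσ
  exact ⟨S, hES, isSolvedForm_of_terminal hσS.not_clashApp hσS.not_occApp hterm⟩

theorem Reachable.isMgu {θ : ℕ → Trm} (h : Reachable E F) (hθ : IsMgu θ F) :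
    IsMgu θ E :=
  ⟨(h.solves_iff θ).1 hθ.1, fun σ hσ => hθ.2 σ ((h.solves_iff σ).2 hσ)⟩

/-- Some run of MMA on `E` halts by action (2). -/
def ReachesClash (E : EqSet) : Prop :=
  ∃ F, Reachable E F ∧ ClashApp F

theorem Reachable.reachesClash (h : Reachable E F) (hF : ReachesClash F) :
    ReachesClash E :=
  let ⟨G, hFG, hG⟩ := hF
  ⟨G, Relation.ReflTransGen.trans h hFG, hG⟩

theorem wnsto_iff (hE : E.Finite) : WNSTO E ↔ Unifiable E ∨ ReachesClash E := by
  constructor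
  · rintro ⟨F, hEF, hF | ⟨hclash, hocc, hterm⟩⟩
    · exact .inr ⟨F, hEF, hF⟩
    · have hmgu := hEF.isMgu (isSolvedForm_of_terminal hclash hocc hterm).isMgu_solvedSubst
      exact .inl ⟨_, hmgu.1⟩
  · rintro (⟨σ, hσ⟩ | ⟨F, hEF, hF⟩)
    · obtain ⟨F, hEF, hterm⟩ := exists_reachable_terminal hE
      have hσF : Solves σ F := (hEF.solves_iff σ).2 hσ
      exact ⟨F, hEF, .inr ⟨hσF.not_clashApp, hσF.not_occApp, hterm⟩⟩
    · exact ⟨F, hEF, .inl hF⟩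

theorem NSTO.wnsto (h : NSTO E) (hE : E.Finite) : WNSTO E := by
  obtain ⟨F, hEF, hterm⟩ := exists_reachable_terminal hE
  exact ⟨F, hEF, or_iff_not_imp_left.2 fun hclash => ⟨hclash, h F hEF, hterm⟩⟩

end SolvedForm

section Simulation

variable {A B C E E' F S : EqSet} {e : Trm × Trm} {x : ℕ} {t : Trm} {θ : ℕ → Trm}

/-- `A` is contained in `B` up to trivial equations `t ≐ t`. Substitutions create such equations,
and runs of MMA can be followed modulo them because they neither clash nor decompose into nontrivial
ones. -/
def SubsetModTrivial (A B : EqSet) : Prop :=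
  ∀ e ∈ A, e.1 ≠ e.2 → e ∈ B

theorem subsetModTrivial_of_subset (h : A ⊆ B) : SubsetModTrivial A B :=
  fun _ he _ => h he

theorem SubsetModTrivial.trans (hAB : SubsetModTrivial A B) (hBC : SubsetModTrivial B C) :
    SubsetModTrivial A C :=
  fun e he hne => hBC e (hAB e he hne) hne

theorem SubsetModTrivial.union_right (h : SubsetModTrivial A B) (C : EqSet) :
    SubsetModTrivial (A ∪ C) (B ∪ C) :=
  fun e he hne => he.imp (fun he => h e he hne) id

theorem SubsetModTrivial.sdiff (h : SubsetModTrivial A B) (C : EqSet) :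
    SubsetModTrivial (A \ C) (B \ C) :=
  fun e he hne => ⟨h e he.1 hne, he.2⟩

theorem SubsetModTrivial.substE (h : SubsetModTrivial A B) (θ : ℕ → Trm) :
    SubsetModTrivial (substE θ A) (substE θ B) := by
  rintro _ ⟨e, he, rfl⟩ hne
  exact ⟨e, h e he fun heq => hne (congrArg (Trm.subst θ) heq), rfl⟩

theorem SubsetModTrivial.eliminate (h : SubsetModTrivial A B) (x : ℕ) (t : Trm) :
    SubsetModTrivial (eliminate x t A) (eliminate x t B) := by
  rintro e (he | he) hne
  · exact .inl he
  · exact .inr ((h.sdiff _).substE _ e he hne)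

theorem SubsetModTrivial.clashApp (h : SubsetModTrivial A B) (hA : ClashApp A) : ClashApp B := by
  obtain ⟨f, sl, g, tl, hmem, hne⟩ := hA
  refine ⟨f, sl, g, tl, h _ hmem fun heq => ?_, hne⟩
  cases heq
  simp at hne

theorem subsetModTrivial_substE_sdiff (he : Solves θ {e}) :
    SubsetModTrivial (substE θ E) (substE θ (E \ {e})) := by
  rintro _ ⟨e', he', rfl⟩ hne
  exact ⟨e', ⟨he', fun heq => hne (he e' heq)⟩, rfl⟩

theorem reachable_eliminate (he : (.var x, t) ∈ E) (hx : ¬ Trm.Occurs x t) :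
    Reachable E (eliminate x t E) := by
  by_cases hocc : x ∈ eqVars (E \ {(.var x, t)})
  · exact .single (.elim he hx hocc)
  · have hself : substE (single x t) (E \ {(.var x, t)}) = E \ {(.var x, t)} :=
      substE_single_eq_self hocc
    rw [eliminate, hself, Set.union_sdiff_cancel (Set.singleton_subset_iff.2 he)]
    exact .refl

theorem MMAStep.simulate (h : MMAStep E E') (hEF : SubsetModTrivial E F) :
    ∃ F', Reachable F F' ∧ SubsetModTrivial E' F' ∧
      ∀ θ, Solves θ E → SubsetModTrivial (substE θ F) (substE θ F') := by
  obtain ⟨e, he, N, hN, rfl⟩ | ⟨x, t, he, hx, -, rfl⟩ := mmaStep_iff.1 h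
  · by_cases heF : e ∈ F
    · refine ⟨F \ {e} ∪ N, .single (hN.mmaStep heF), (hEF.sdiff _).union_right N, fun θ hθ => ?_⟩
      rw [substE_union]
      exact (subsetModTrivial_substE_sdiff ((solves_iff_of_mem he).1 hθ).1).trans
        (subsetModTrivial_of_subset Set.subset_union_left)
    · have htriv : e.1 = e.2 := by_contra fun hne => heF (hEF e he hne)
      refine ⟨F, .refl, ?_, fun _ _ => subsetModTrivial_of_subset subset_rfl⟩
      rintro e' (he' | he') hne
      · exact hEF e' he'.1 hne
      · exact absurd (hN.fst_eq_snd htriv he') hne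
  · have heF : (.var x, t) ∈ F := hEF _ he fun heq : .var x = t => hx (heq ▸ .var)
    refine ⟨eliminate x t F, reachable_eliminate heF hx, hEF.eliminate x t, fun θ hθ => ?_⟩
    rw [substE_eliminate heF (by simpa using hθ _ he)]
    exact subsetModTrivial_of_subset subset_rfl

theorem Reachable.simulate (h : Reachable E E') (hEF : SubsetModTrivial E F) :
    ∃ F', Reachable F F' ∧ SubsetModTrivial E' F' ∧
      ∀ θ, Solves θ E → SubsetModTrivial (substE θ F) (substE θ F') := by
  induction h with
  | refl => exact ⟨F, .refl, hEF, fun _ _ => subsetModTrivial_of_subset subset_rfl⟩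
  | tail hE hstep ih =>
    obtain ⟨F₁, hF₁, hsub₁, hθ₁⟩ := ih
    obtain ⟨F₂, hF₂, hsub₂, hθ₂⟩ := hstep.simulate hsub₁
    exact ⟨F₂, Relation.ReflTransGen.trans hF₁ hF₂, hsub₂,
      fun θ hθ => (hθ₁ θ hθ).trans (hθ₂ θ ((Reachable.solves_iff hE θ).2 hθ))⟩

theorem ReachesClash.of_subsetModTrivial (h : ReachesClash A) (hAB : SubsetModTrivial A B) :
    ReachesClash B := by
  obtain ⟨A', hA, hclash⟩ := h
  obtain ⟨B', hB, hsub, -⟩ := hA.simulate hAB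
  exact ⟨B', hB, hsub.clashApp hclash⟩

theorem IsSolvedForm.subset_of_subsetModTrivial (hS : IsSolvedForm S) (h : SubsetModTrivial S F) :
    S ⊆ F := by
  intro e he
  obtain ⟨x, t, rfl, hsolved⟩ := hS e he
  exact h _ he fun heq : .var x = t => hsolved.not_occurs (heq ▸ .var)

theorem IsSolvedForm.subset_eliminate (hS : IsSolvedForm S) (hSF : S ⊆ F)
    (hmem : (.var x, t) ∈ S) : S ⊆ eliminate x t F := by
  have hself : substE (single x t) (S \ {(.var x, t)}) = S \ {(.var x, t)} :=
    substE_single_eq_self fun ⟨e, he, hxe⟩ =>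
      he.2 ((hS.isSolvedEq hmem).eq_of_occursEq e he.1 hxe)
  rw [← Set.union_sdiff_cancel (Set.singleton_subset_iff.2 hmem), ← hself, eliminate]
  exact Set.union_subset_union_right _ (Set.image_mono (Set.sdiff_subset_sdiff_left hSF))

theorem IsSolvedForm.exists_reachable_substE (hS : IsSolvedForm S) (hSF : S ⊆ F)
    (hF : F.Finite) :
    ∃ F', Reachable F F' ∧ SubsetModTrivial (substE (solvedSubst S) F) F' := by
  have hσ : Solves (solvedSubst S) S := hS.isMgu_solvedSubst.1
  induction acc_mmaStep hF with
  | intro F _ ih =>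
    by_cases hstep : ∃ x t, (.var x, t) ∈ S ∧ x ∈ eqVars (F \ {(.var x, t)})
    · obtain ⟨x, t, hmem, hocc⟩ := hstep
      have helim : MMAStep F (eliminate x t F) :=
        .elim (hSF hmem) (hS.isSolvedEq hmem).not_occurs hocc
      obtain ⟨F', hreach, hsub⟩ :=
        ih _ helim (hS.subset_eliminate hSF hmem) (helim.finite hF)
      rw [substE_eliminate (hSF hmem) (by simpa using hσ _ hmem)] at hsub
      exact ⟨F', hreach.head helim, hsub⟩
    · have hself : substE (solvedSubst S) (F \ S) = F \ S := by
        refine substE_eq_self fun x ⟨e, he, hx⟩ => solvedSubst_of_forall_notMem fun t ht => ?_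
        exact hstep ⟨x, t, ht, e, ⟨he.1, fun heq => he.2 (heq ▸ ht)⟩, hx⟩
      refine ⟨F, .refl, ?_⟩
      rw [← Set.union_sdiff_cancel hSF, substE_union, hself]
      rintro e (⟨e', he', rfl⟩ | he) hne
      · exact absurd (hσ e' he') hne
      · exact .inr he

end Simulation

section Renaming

variable {A E F N : EqSet} {e : Trm × Trm} {r : ℕ → ℕ} {θ σ : ℕ → Trm}

theorem Replaces.rename (h : Replaces e N) (r : ℕ → ℕ) :
    Replaces (Trm.subst (.var ∘ r) e.1, Trm.subst (.var ∘ r) e.2) (substE (.var ∘ r) N) := by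
  cases h with
  | @decomp f sl tl hlen =>
    have hzip : substE (.var ∘ r) {e | e ∈ sl.zip tl} =
        {e | e ∈ (sl.map (Trm.subst (.var ∘ r))).zip (tl.map (Trm.subst (.var ∘ r)))} := by
      ext
      simp [substE, List.zip_map]
    simpa only [hzip, Trm.subst_fn] using Replaces.decomp (by simpa using hlen)
  | delete => simpa [substE] using Replaces.delete
  | @flip t x ht =>
    rw [substE_singleton]
    simp only [Trm.subst_var, Function.comp_apply]
    refine .flip fun y => ?_
    cases t with
    | var z => exact absurd rfl (ht z)
    | fn f ts => simp

theorem substE_rename_sdiff_singleton (hr : r.Injective) :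
    substE (.var ∘ r) (E \ {e}) =
      substE (.var ∘ r) E \ {(Trm.subst (.var ∘ r) e.1, Trm.subst (.var ∘ r) e.2)} := by
  have hinj : Function.Injective fun e : Trm × Trm =>
      (Trm.subst (.var ∘ r) e.1, Trm.subst (.var ∘ r) e.2) :=
    (Trm.injective_subst_rename hr).prodMap (Trm.injective_subst_rename hr)
  rw [← substE_singleton]
  exact Set.image_sdiff hinj E {e}

theorem substE_rename_eliminate (hr : r.Injective) (x : ℕ) (t : Trm) :
    substE (.var ∘ r) (eliminate x t E) =
      eliminate (r x) (Trm.subst (.var ∘ r) t) (substE (.var ∘ r) E) := by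
  have hcomm (u : Trm) : Trm.subst (.var ∘ r) (Trm.subst (single x t) u) =
      Trm.subst (single (r x) (Trm.subst (.var ∘ r) t)) (Trm.subst (.var ∘ r) u) := by
    rw [Trm.subst_subst, Trm.subst_subst, Trm.subst_eq_subst_iff]
    intro y _
    by_cases hyx : y = x <;> simp [single, hyx, hr.eq_iff]
  have hsdiff := substE_rename_sdiff_singleton (E := E) (e := (.var x, t)) hr
  simp only [Trm.subst_var, Function.comp_apply] at hsdiff
  rw [eliminate, eliminate, substE_union, substE_singleton, ← hsdiff]
  simp [substE, Set.image_image, hcomm]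

theorem occurs_subst_rename_iff (hr : r.Injective) {x : ℕ} {t : Trm} :
    Trm.Occurs (r x) (Trm.subst (.var ∘ r) t) ↔ Trm.Occurs x t := by
  simp [Trm.occurs_subst, hr.eq_iff]

theorem MMAStep.rename (h : MMAStep E F) (hr : r.Injective) :
    MMAStep (substE (.var ∘ r) E) (substE (.var ∘ r) F) := by
  obtain ⟨e, he, N, hN, rfl⟩ | ⟨x, t, he, hx, ⟨e, hmem, hocc⟩, rfl⟩ := mmaStep_iff.1 h
  · rw [substE_union, substE_rename_sdiff_singleton hr]
    exact (hN.rename r).mmaStep ⟨e, he, rfl⟩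
  · rw [substE_rename_eliminate hr]
    have helim : (Trm.var (r x), Trm.subst (.var ∘ r) t) ∈ substE (.var ∘ r) E :=
      ⟨_, he, by simp⟩
    have hother := (substE_rename_sdiff_singleton hr).subset (Set.mem_image_of_mem _ hmem)
    simp only [Trm.subst_var, Function.comp_apply] at hother
    refine .elim helim (by rwa [occurs_subst_rename_iff hr]) ⟨_, hother, ?_⟩
    simpa only [OccursEq, occurs_subst_rename_iff hr] using hocc

theorem ClashApp.substE (h : ClashApp E) (θ : ℕ → Trm) : ClashApp (substE θ E) := by
  obtain ⟨f, sl, g, tl, hmem, hne⟩ := h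
  exact ⟨f, sl.map (Trm.subst θ), g, tl.map (Trm.subst θ), ⟨_, hmem, by simp⟩, by simpa using hne⟩

theorem ReachesClash.rename (h : ReachesClash E) (hr : r.Injective) :
    ReachesClash (substE (.var ∘ r) E) := by
  obtain ⟨F, hreach, hclash⟩ := h
  refine ⟨substE (.var ∘ r) F, ?_, hclash.substE _⟩
  exact Relation.ReflTransGen.lift _ (fun _ _ hstep => hstep.rename hr) _ _ hreach

theorem exists_perm_of_subst_eq_var {V : Set ℕ} (hV : V.Finite) {ρ ρ' : ℕ → Trm}
    (h : ∀ y ∈ V, Trm.subst ρ' (ρ y) = .var y) :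
    ∃ π : Equiv.Perm ℕ, ∀ y ∈ V, ρ y = .var (π y) := by
  have hvar (y : V) : ∃ z, ρ y = .var z := by
    cases hy : ρ y with
    | var z => exact ⟨z, rfl⟩
    | fn f ts => simpa [hy] using h y y.2
  choose g hg using hvar
  have hginj : g.Injective := fun y z hyz => by
    have heq : ρ y = ρ z := by rw [hg, hg, hyz]
    have hyz' := h y y.2
    rw [heq, h z z.2] at hyz'
    exact Subtype.ext (Trm.var.inj hyz').symm
  have := hV.to_subtype
  obtain ⟨π, hπ⟩ := Equiv.Perm.exists_extending_pair Subtype.val g Subtype.val_injective hginj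
  exact ⟨π, fun y hy => (hg ⟨y, hy⟩).trans (congrArg _ (hπ ⟨y, hy⟩).symm)⟩

theorem IsMgu.exists_injective_rename (hθ : IsMgu θ E) (hσ : IsMgu σ E) (hA : A.Finite) :
    ∃ r : ℕ → ℕ, r.Injective ∧ substE σ A = substE (.var ∘ r) (substE θ A) := by
  obtain ⟨ρ, hρ⟩ := hθ.2 σ hσ.1
  obtain ⟨ρ', hρ'⟩ := hσ.2 θ hθ.1
  have hinv (t : Trm) :
      Trm.subst (fun y => Trm.subst ρ' (ρ y)) (Trm.subst θ t) = Trm.subst θ t := by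
    simp only [← Trm.subst_subst (σ := ρ)]
    simp only [Trm.subst_subst (σ := θ), ← hρ]
    simp only [Trm.subst_subst, ← hρ']
  have hvars : ∀ y ∈ eqVars (substE θ A), Trm.subst ρ' (ρ y) = .var y := by
    rintro y ⟨_, ⟨e, -, rfl⟩, hy | hy⟩
    · exact Trm.subst_eq_self_iff.1 (hinv e.1) y hy
    · exact Trm.subst_eq_self_iff.1 (hinv e.2) y hy
  obtain ⟨π, hπ⟩ := exists_perm_of_subst_eq_var (finite_eqVars (finite_substE hA)) hvars
  refine ⟨π, π.injective, ?_⟩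
  calc substE σ A = substE ρ (substE θ A) := by
        simp only [substE, Set.image_image, Trm.subst_subst, ← hρ]
    _ = substE (.var ∘ π) (substE θ A) := substE_congr hπ

end Renaming

theorem ReachesClash.union_of_isMgu {E₁ E₂ : EqSet} {θ : ℕ → Trm} (h₁ : E₁.Finite)
    (h₂ : E₂.Finite) (hθ : IsMgu θ E₁) (h : ReachesClash (substE θ E₂)) :
    ReachesClash (E₁ ∪ E₂) := by
  obtain ⟨S, hE₁S, hS⟩ := exists_reachable_isSolvedForm h₁ ⟨θ, hθ.1⟩
  have hσ : IsMgu (solvedSubst S) E₁ := hE₁S.isMgu hS.isMgu_solvedSubst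
  obtain ⟨F, hEF, hSF, hsubF⟩ :=
    hE₁S.simulate (subsetModTrivial_of_subset (Set.subset_union_left (t := E₂)))
  obtain ⟨G, hFG, hsubG⟩ := hS.exists_reachable_substE (hS.subset_of_subsetModTrivial hSF)
    (hEF.finite (h₁.union h₂))
  have hsub : SubsetModTrivial (substE (solvedSubst S) E₂) G :=
    ((subsetModTrivial_of_subset (Set.image_mono Set.subset_union_right)).trans
      (hsubF _ hσ.1)).trans hsubG
  obtain ⟨r, hr, hrename⟩ := hθ.exists_injective_rename hσ h₂
  have hG : ReachesClash G := (hrename ▸ h.rename hr).of_subsetModTrivial hsub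
  exact hEF.reachesClash (hFG.reachesClash hG)

theorem Unifiable.union_of_substE {E₁ E₂ : EqSet} {θ : ℕ → Trm} (hθ : Solves θ E₁)
    (h : Unifiable (substE θ E₂)) : Unifiable (E₁ ∪ E₂) := by
  obtain ⟨σ, hσ⟩ := h
  refine ⟨fun x => Trm.subst σ (θ x), solves_union.2 ⟨fun e he => ?_, solves_substE.1 hσ⟩⟩
  simpa only [Trm.subst_subst] using congrArg (Trm.subst σ) (hθ e he)

theorem stmt10_general (E1 E2 : EqSet) (h1 : E1.Finite) (h2 : E2.Finite) (θ1 : ℕ → Trm)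
    (hmgu : IsMgu θ1 E1) (hwnsto : WNSTO (substE θ1 E2)) : WNSTO (E1 ∪ E2) := by
  rw [wnsto_iff (finite_substE h2)] at hwnsto
  rw [wnsto_iff (h1.union h2)]
  exact hwnsto.imp (.union_of_substE hmgu.1) (.union_of_isMgu h1 h2 hmgu)

/-- Let `E1` and `E2` be finite equation sets.  If `E1` is NSTO, `θ1` is a most
general unifier of `E1`, and the equation set
`E2θ1 = {sθ1 ≐ tθ1 | s ≐ t ∈ E2}` is NSTO, then `E1 ∪ E2` is WNSTO. -/
theorem stmt10 (E1 E2 : EqSet) (h1 : E1.Finite) (h2 : E2.Finite)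
    (θ1 : ℕ → Trm) (hnsto1 : NSTO E1) (hmgu : IsMgu θ1 E1)
    (hnsto2 : NSTO (substE θ1 E2)) :
    WNSTO (E1 ∪ E2) :=
  stmt10_general E1 E2 h1 h2 θ1 hmgu (hnsto2.wnsto (finite_substE h2))
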